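/- Fix t > 0, (x̂, â) ∈ ℝ², points (x₁,a₁),…,(x_m,a_m) ∈ ℝ², and a subset J ⊆ {1,…,m}. Let K := { f : ℝ → ℝ 1-Lipschitz : p_{x̂,â}(t) ≤ f ≤ p_{x̂,â}(0) pointwise, f(x_j) ≤ a_j for all j = 1,…,m, and f(x_j) = a_j for all j ∈ J }. If K is nonempty, then the functional f ↦ I(f ∥ p_{x̂,â}(t)) is finite on K, attains its infimum over K, and the minimizer is unique. -/

import Mathlib

open MeasureTheory

/-- The (shifted) parabola `p(t,x)`: for `t > 0`, `p(t,x) = -t/2 - x²/(2t)` when `|x| ≤ t`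
and `p(t,x) = -|x|` otherwise; also `p(0,x) = -|x|`. -/
noncomputable def parab (t x : ℝ) : ℝ :=
  if 0 < t ∧ |x| ≤ t then -t / 2 - x ^ 2 / (2 * t) else -|x|

/-- The shifted parabola `p_{x̂,â}(t,x) = p(t, x - x̂) + â`. -/
noncomputable def parabXA (xh ah t x : ℝ) : ℝ :=
  parab t (x - xh) + ah

/-- The Bernoulli entropy `H(u) = ((1+u)/2)·log(1+u) + ((1-u)/2)·log(1-u)`
(with `0 · log 0 = 0`, as `Real.log 0 = 0`). -/
noncomputable def Hber (u : ℝ) : ℝ :=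
  (1 + u) / 2 * Real.log (1 + u) + (1 - u) / 2 * Real.log (1 - u)

/-- The excess entropy `I(f ∥ p_{x̂,â}(t)) = ∫ ( H(f') - H(∂ₓ p_{x̂,â}(t,·)) )`. -/
noncomputable def excessEntropy (xh ah t : ℝ) (f : ℝ → ℝ) : ℝ :=
  ∫ y : ℝ, (Hber (deriv f y) - Hber (deriv (parabXA xh ah t) y))

/-- The admissible class `K`: 1-Lipschitz functions sandwiched between `p_{x̂,â}(t)` and
`p_{x̂,â}(0)`, lying below all the points `(x_j, a_j)`, and passing through those with `j ∈ J`. -/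
def Kset (xh ah t : ℝ) (m : ℕ) (x a : Fin m → ℝ) (J : Set (Fin m)) : Set (ℝ → ℝ) :=
  {f | LipschitzWith 1 f ∧ (∀ y, parabXA xh ah t y ≤ f y ∧ f y ≤ parabXA xh ah 0 y) ∧
    (∀ j, f (x j) ≤ a j) ∧ ∀ j ∈ J, f (x j) = a j}

open Set Filter Topology

theorem Hber_cont : Continuous Hber := by
  have h1 : Continuous (fun u : ℝ => ((1 + u) * Real.log (1 + u) + (1 - u) * Real.log (1 - u)) / 2) := by
    have e1 := Real.continuous_mul_log.comp (continuous_const.add continuous_id : Continuous (fun u : ℝ => 1 + u))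
    have e2 := Real.continuous_mul_log.comp (continuous_const.sub continuous_id : Continuous (fun u : ℝ => 1 - u))
    exact (e1.add e2).div_const 2
  refine h1.congr fun u => ?_
  unfold Hber
  ring

theorem Hber_convex : ConvexOn ℝ (Icc (-1) 1) (fun u => Hber u - u ^ 2 / 2) := by
  have hd : ∀ u ∈ Ioo (-1 : ℝ) 1, HasDerivAt (fun u => Hber u - u ^ 2 / 2)
      ((Real.log (1 + u) - Real.log (1 - u)) / 2 - u) u := by
    intro u hu
    have h1 : (1 + u) ≠ 0 := by linarith [hu.1]
    have h2 : (1 - u) ≠ 0 := by linarith [hu.2]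
    have a1 : HasDerivAt (fun u : ℝ => 1 + u) 1 u := (hasDerivAt_id u).const_add 1
    have a2 : HasDerivAt (fun u : ℝ => 1 - u) (-1) u := (hasDerivAt_id u).const_sub 1
    have := ((((a1.div_const 2).mul (a1.log h1)).add ((a2.div_const 2).mul (a2.log h2))).sub
      (((hasDerivAt_id u).pow 2).div_const 2))
    refine this.congr_deriv ?_
    simp
    field_simp
    ring
  have hd2 : ∀ u ∈ Ioo (-1 : ℝ) 1, HasDerivAt (fun u => (Real.log (1 + u) - Real.log (1 - u)) / 2 - u)
      ((1 / (1 + u) - (-1) / (1 - u)) / 2 - 1) u := by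
    intro u hu
    have h1 : (1 + u) ≠ 0 := by linarith [hu.1]
    have h2 : (1 - u) ≠ 0 := by linarith [hu.2]
    have a1 : HasDerivAt (fun u : ℝ => 1 + u) 1 u := (hasDerivAt_id u).const_add 1
    have a2 : HasDerivAt (fun u : ℝ => 1 - u) (-1) u := (hasDerivAt_id u).const_sub 1
    exact (((a1.log h1).sub (a2.log h2)).div_const 2).sub (hasDerivAt_id u)
  have hmono : MonotoneOn (fun u : ℝ => (Real.log (1 + u) - Real.log (1 - u)) / 2 - u) (Ioo (-1) 1) := by
    refine monotoneOn_of_deriv_nonneg (convex_Ioo _ _)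
      (fun u hu => (hd2 u hu).continuousAt.continuousWithinAt) ?_ ?_
    · intro u hu
      rw [interior_Ioo] at hu
      exact (hd2 u hu).differentiableAt.differentiableWithinAt
    · intro u hu
      rw [interior_Ioo] at hu
      rw [(hd2 u hu).deriv]
      have h1 : 0 < (1 + u) := by linarith [hu.1]
      have h2 : 0 < (1 - u) := by linarith [hu.2]
      have : (1 / (1 + u) - (-1) / (1 - u)) / 2 - 1 = u ^ 2 / ((1 + u) * (1 - u)) := by
        field_simp
        ring
      rw [this]
      positivity
  refine MonotoneOn.convexOn_of_deriv (convex_Icc _ _) ?_ ?_ ?_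
  · exact (Hber_cont.sub (by fun_prop)).continuousOn
  · intro u hu
    rw [interior_Icc] at hu
    exact (hd u hu).differentiableAt.differentiableWithinAt
  · rw [interior_Icc]
    refine hmono.congr fun u hu => ?_
    exact (hd u hu).deriv.symm

theorem Hber_mid {u v : ℝ} (hu : |u| ≤ 1) (hv : |v| ≤ 1) :
    (u - v) ^ 2 / 8 ≤ (Hber u + Hber v) / 2 - Hber ((u + v) / 2) := by
  have := Hber_convex.2 (abs_le.1 hu) (abs_le.1 hv) (by norm_num : (0 : ℝ) ≤ 1 / 2)
    (by norm_num : (0 : ℝ) ≤ 1 / 2) (by norm_num)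
  simp only [smul_eq_mul] at this
  rw [show 1 / 2 * u + 1 / 2 * v = (u + v) / 2 by ring] at this
  nlinarith

theorem Hber_bdd : ∃ C : ℝ, 0 ≤ C ∧ ∀ u : ℝ, |u| ≤ 1 → |Hber u| ≤ C := by
  obtain ⟨C, hC⟩ := (isCompact_Icc (a := (-1 : ℝ)) (b := 1)).exists_bound_of_continuousOn
    Hber_cont.continuousOn
  refine ⟨C, (norm_nonneg _).trans (hC 0 (by simp)), fun u hu => hC u (abs_le.1 hu)⟩

/-- integrand -/
noncomputable def Dint (xh ah t : ℝ) (f : ℝ → ℝ) (y : ℝ) : ℝ :=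
  Hber (deriv f y) - Hber (deriv (parabXA xh ah t) y)

theorem parab_off {xh ah t y : ℝ} (hy : y ∉ Icc (xh - t) (xh + t)) :
    parabXA xh ah t y = parabXA xh ah 0 y := by
  unfold parabXA parab
  have : ¬ (|y - xh| ≤ t) := by
    intro h
    rw [abs_le] at h
    exact hy ⟨by linarith, by linarith⟩
  simp [this]

section
variable {xh ah t : ℝ} {m : ℕ} {x a : Fin m → ℝ} {J : Set (Fin m)} {f g : ℝ → ℝ}

theorem K_off (hf : f ∈ Kset xh ah t m x a J) {y : ℝ} (hy : y ∉ Icc (xh - t) (xh + t)) :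
    f y = parabXA xh ah t y :=
  le_antisymm ((parab_off (ah := ah) hy) ▸ (hf.2.1 y).2) (hf.2.1 y).1

theorem K_left (ht : 0 < t) (hf : f ∈ Kset xh ah t m x a J) :
    f (xh - t) = parabXA xh ah t (xh - t) := by
  refine le_antisymm ((hf.2.1 _).2.trans ?_) (hf.2.1 _).1
  unfold parabXA parab
  simp [ht, abs_of_pos ht]
  field_simp
  linarith

theorem K_deriv_off (hf : f ∈ Kset xh ah t m x a J) {y : ℝ} (hy : y ∉ Icc (xh - t) (xh + t)) :
    deriv f y = deriv (parabXA xh ah t) y := by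
  refine Filter.EventuallyEq.deriv_eq ?_
  filter_upwards [isClosed_Icc.isOpen_compl.mem_nhds hy] with z hz
  exact K_off hf hz

theorem K_deriv_le (hf : f ∈ Kset xh ah t m x a J) (y : ℝ) : |deriv f y| ≤ 1 := by
  simpa using norm_deriv_le_of_lipschitz (x₀ := y) hf.1

theorem p_deriv_le (ht : 0 < t) {y : ℝ} (hy : y ∈ Ioo (xh - t) (xh + t)) :
    |deriv (parabXA xh ah t) y| ≤ 1 := by
  have h1 : (parabXA xh ah t) =ᶠ[𝓝 y] fun z => -t / 2 - (z - xh) ^ 2 / (2 * t) + ah := by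
    filter_upwards [isOpen_Ioo.mem_nhds hy] with z hz
    have : |z - xh| ≤ t := abs_le.2 ⟨by linarith [hz.1], by linarith [hz.2]⟩
    simp [parabXA, parab, this, ht]
  have h2 : HasDerivAt (fun z => -t / 2 - (z - xh) ^ 2 / (2 * t) + ah) (-(y - xh) / t) y := by
    have := (((((hasDerivAt_id y).sub_const xh).pow 2).div_const (2 * t)).const_sub (-t / 2)).add_const ah
    refine this.congr_deriv ?_
    simp
    field_simp
    ring
  rw [h1.deriv_eq, h2.deriv, abs_div, abs_neg, abs_of_pos ht, div_le_one ht]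
  exact abs_le.2 ⟨by linarith [hy.1], by linarith [hy.2]⟩

theorem D_bound (ht : 0 < t) : ∃ C : ℝ, 0 ≤ C ∧ ∀ f ∈ Kset xh ah t m x a J, ∀ᵐ y : ℝ,
    ‖Dint xh ah t f y‖ ≤ (Icc (xh - t) (xh + t)).indicator (fun _ => C) y := by
  obtain ⟨C, hC0, hC⟩ := Hber_bdd
  refine ⟨C + C, by positivity, fun f hf => ?_⟩
  have h1 : ∀ᵐ y : ℝ, y ≠ xh - t := by simp [ae_iff, measure_singleton]
  have h2 : ∀ᵐ y : ℝ, y ≠ xh + t := by simp [ae_iff, measure_singleton]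
  filter_upwards [h1, h2] with y hy1 hy2
  by_cases hy : y ∈ Icc (xh - t) (xh + t)
  · rw [indicator_of_mem hy]
    have hy' : y ∈ Ioo (xh - t) (xh + t) := ⟨lt_of_le_of_ne hy.1 hy1.symm, lt_of_le_of_ne hy.2 hy2⟩
    exact (norm_sub_le _ _).trans (add_le_add (hC _ (K_deriv_le hf y)) (hC _ (p_deriv_le ht hy')))
  · rw [indicator_of_notMem hy]
    simp [Dint, K_deriv_off hf hy]

theorem D_meas (f : ℝ → ℝ) : Measurable (Dint xh ah t f) :=
  (Hber_cont.measurable.comp (measurable_deriv f)).sub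
    (Hber_cont.measurable.comp (measurable_deriv _))

theorem bound_int (C : ℝ) : Integrable ((Icc (xh - t) (xh + t)).indicator (fun _ => C)) :=
  (integrable_indicator_iff measurableSet_Icc).2 (integrableOn_const (by simp))

theorem D_int (ht : 0 < t) (hf : f ∈ Kset xh ah t m x a J) : Integrable (Dint xh ah t f) := by
  obtain ⟨C, hC0, hC⟩ := D_bound (xh := xh) (ah := ah) (m := m) (x := x) (a := a) (J := J) ht
  exact (bound_int C).mono' (D_meas f).aestronglyMeasurable (hC f hf)

theorem I_lower (ht : 0 < t) : ∃ B : ℝ, ∀ f ∈ Kset xh ah t m x a J, B ≤ excessEntropy xh ah t f := by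
  obtain ⟨C, hC0, hC⟩ := D_bound (xh := xh) (ah := ah) (m := m) (x := x) (a := a) (J := J) ht
  refine ⟨-∫ y, (Icc (xh - t) (xh + t)).indicator (fun _ => C) y, fun f hf => ?_⟩
  exact (abs_le.1 (norm_integral_le_of_norm_le (bound_int C) (hC f hf))).1

theorem K_mid (hf : f ∈ Kset xh ah t m x a J) (hg : g ∈ Kset xh ah t m x a J) :
    (fun y => (f y + g y) / 2) ∈ Kset xh ah t m x a J := by
  refine ⟨?_, fun y => ?_, fun j => ?_, fun j hj => ?_⟩
  · refine LipschitzWith.of_dist_le_mul fun y z => ?_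
    have h1 := hf.1.dist_le_mul y z
    have h2 := hg.1.dist_le_mul y z
    simp only [Real.dist_eq, NNReal.coe_one, one_mul] at *
    rw [abs_le] at *
    constructor <;> linarith
  · have := hf.2.1 y
    have := hg.2.1 y
    constructor <;> linarith
  · have := hf.2.2.1 j
    have := hg.2.2.1 j
    simp only
    linarith
  · have := hf.2.2.2 j hj
    have := hg.2.2.2 j hj
    simp only
    linarith

theorem sq_memLp (hf : f ∈ Kset xh ah t m x a J) (p : ENNReal) :
    MemLp (deriv f) p (volume.restrict (Icc (xh - t) (xh + t))) :=
  MemLp.of_bound (measurable_deriv f).aestronglyMeasurable 1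
    (Eventually.of_forall fun y => K_deriv_le hf y)

theorem key_ineq (ht : 0 < t) (hf : f ∈ Kset xh ah t m x a J) (hg : g ∈ Kset xh ah t m x a J) :
    (∫ y in Icc (xh - t) (xh + t), (deriv f y - deriv g y) ^ 2) / 8 ≤
      (excessEntropy xh ah t f + excessEntropy xh ah t g) / 2
        - excessEntropy xh ah t (fun y => (f y + g y) / 2) := by
  have hh := K_mid hf hg
  have e : (excessEntropy xh ah t f + excessEntropy xh ah t g) / 2
        - excessEntropy xh ah t (fun y => (f y + g y) / 2) =
      ∫ y, ((Dint xh ah t f y + Dint xh ah t g y) / 2 - Dint xh ah t (fun y => (f y + g y) / 2) y) := by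
    have hi : Integrable (fun y => (Dint xh ah t f y + Dint xh ah t g y) / 2) :=
      ((D_int ht hf).add (D_int ht hg)).div_const 2
    rw [integral_sub hi (D_int ht hh), integral_div,
      integral_add (D_int ht hf) (D_int ht hg)]
    rfl
  rw [e, ← integral_div, ← integral_indicator measurableSet_Icc]
  refine integral_mono_ae ?_ ((((D_int ht hf).add (D_int ht hg)).div_const 2).sub (D_int ht hh)) ?_
  · rw [integrable_indicator_iff measurableSet_Icc]
    exact (((sq_memLp hf 2).sub (sq_memLp hg 2)).integrable_sq).div_const 8
  · filter_upwards [hf.1.ae_differentiableAt_real, hg.1.ae_differentiableAt_real] with y h1 h2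
    have hd : deriv (fun y => (f y + g y) / 2) y = (deriv f y + deriv g y) / 2 :=
      ((h1.hasDerivAt.add h2.hasDerivAt).div_const 2).deriv
    have := Hber_mid (K_deriv_le hf y) (K_deriv_le hg y)
    have e2 : (Dint xh ah t f y + Dint xh ah t g y) / 2 - Dint xh ah t (fun y => (f y + g y) / 2) y
      = (Hber (deriv f y) + Hber (deriv g y)) / 2 - Hber ((deriv f y + deriv g y) / 2) := by
      simp only [Dint, hd]
      ring
    simp only [e2]
    refine le_trans ?_ this
    by_cases hy : y ∈ Icc (xh - t) (xh + t)
    · rw [indicator_of_mem hy]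
    · rw [indicator_of_notMem hy]
      positivity

theorem K_ftc (hf : f ∈ Kset xh ah t m x a J) (y : ℝ) :
    f y = f (xh - t) + ∫ z in (xh - t)..y, deriv f z := by
  rw [AbsolutelyContinuousOnInterval.integral_deriv_eq_sub
    hf.1.lipschitzOnWith.absolutelyContinuousOnInterval]
  ring

theorem K_eq (ht : 0 < t) (hf : f ∈ Kset xh ah t m x a J) (hg : g ∈ Kset xh ah t m x a J)
    (h : ∫ y in Icc (xh - t) (xh + t), (deriv f y - deriv g y) ^ 2 ≤ 0) : f = g := by
  have h0 : ∫ y in Icc (xh - t) (xh + t), (deriv f y - deriv g y) ^ 2 = 0 :=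
    le_antisymm h (integral_nonneg fun y => sq_nonneg _)
  have hi : Integrable (fun y => (deriv f y - deriv g y) ^ 2)
      (volume.restrict (Icc (xh - t) (xh + t))) :=
    ((sq_memLp hf 2).sub (sq_memLp hg 2)).integrable_sq
  rw [integral_eq_zero_iff_of_nonneg (fun y => sq_nonneg _) hi, EventuallyEq,
    ae_restrict_iff' measurableSet_Icc] at h0
  funext y
  rw [K_ftc hf, K_ftc hg, K_left ht hf, K_left ht hg]
  congr 1
  refine intervalIntegral.integral_congr_ae ?_
  filter_upwards [h0] with z hz _
  by_cases hzS : z ∈ Icc (xh - t) (xh + t)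
  · have := hz hzS
    simp only [Pi.zero_apply] at this
    nlinarith [pow_eq_zero_iff (two_ne_zero) |>.1 this]
  · rw [K_deriv_off hf hzS, K_deriv_off hg hzS]

theorem K_limit {F : ℕ → ℝ → ℝ} (hF : ∀ n, F n ∈ Kset xh ah t m x a J)
    (h : ∀ y, Tendsto (fun n => F n y) atTop (𝓝 (f y))) : f ∈ Kset xh ah t m x a J := by
  refine ⟨?_, fun y => ⟨?_, ?_⟩, fun j => ?_, fun j hj => ?_⟩
  · refine LipschitzWith.of_dist_le_mul fun y z => ?_
    exact le_of_tendsto ((h y).dist (h z)) (Eventually.of_forall fun n => (hF n).1.dist_le_mul y z)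
  · exact ge_of_tendsto (h y) (Eventually.of_forall fun n => ((hF n).2.1 y).1)
  · exact le_of_tendsto (h y) (Eventually.of_forall fun n => ((hF n).2.1 y).2)
  · exact le_of_tendsto (h _) (Eventually.of_forall fun n => (hF n).2.2.1 j)
  · refine tendsto_nhds_unique (h _) ?_
    simp only [fun n => (hF n).2.2.2 j hj]
    exact tendsto_const_nhds

theorem K_compact (ht : 0 < t) {F : ℕ → ℝ → ℝ} {G : ℝ → ℝ} (hF : ∀ n, F n ∈ Kset xh ah t m x a J)
    (h : ∀ᵐ y ∂(volume.restrict (Icc (xh - t) (xh + t))),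
      Tendsto (fun n => deriv (F n) y) atTop (𝓝 (G y))) :
    ∃ f ∈ Kset xh ah t m x a J,
      Tendsto (fun n => excessEntropy xh ah t (F n)) atTop (𝓝 (excessEntropy xh ah t f)) := by
  rw [ae_restrict_iff' measurableSet_Icc] at h
  let G' : ℝ → ℝ := fun y => if y ∈ Icc (xh - t) (xh + t) then G y else deriv (parabXA xh ah t) y
  have h' : ∀ᵐ y : ℝ, Tendsto (fun n => deriv (F n) y) atTop (𝓝 (G' y)) := by
    filter_upwards [h] with y hy
    by_cases hyS : y ∈ Icc (xh - t) (xh + t)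
    · simpa only [G', hyS, if_true] using hy hyS
    · simp only [G', hyS, if_false, fun n => K_deriv_off (hF n) hyS]
      exact tendsto_const_nhds
  have hGm : AEStronglyMeasurable G' volume :=
    aestronglyMeasurable_of_tendsto_ae atTop (fun n => (measurable_deriv (F n)).aestronglyMeasurable) h'
  have hGb : ∀ᵐ y : ℝ, ‖G' y‖ ≤ 1 := by
    filter_upwards [h'] with y hy
    exact le_of_tendsto hy.norm (Eventually.of_forall fun n => K_deriv_le (hF n) y)
  have hGl : LocallyIntegrable G' volume := by
    refine (locallyIntegrable_const (1 : ℝ)).mono hGm ?_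
    simpa using hGb
  let f : ℝ → ℝ := fun y => parabXA xh ah t (xh - t) + ∫ z in (xh - t)..y, G' z
  have hlim : ∀ y, Tendsto (fun n => F n y) atTop (𝓝 (f y)) := by
    intro y
    have e : (fun n => F n y) = fun n => parabXA xh ah t (xh - t) + ∫ z in (xh - t)..y, deriv (F n) z := by
      funext n
      rw [K_ftc (hF n), K_left ht (hF n)]
    rw [e]
    refine tendsto_const_nhds.add ?_
    refine intervalIntegral.tendsto_integral_filter_of_dominated_convergence (fun _ => 1)
      (Eventually.of_forall fun n => (measurable_deriv (F n)).aestronglyMeasurable)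
      (Eventually.of_forall fun n => Eventually.of_forall fun z _ => K_deriv_le (hF n) z)
      (by simp) ?_
    filter_upwards [h'] with z hz _ using hz
  have hfK : f ∈ Kset xh ah t m x a J := K_limit hF hlim
  refine ⟨f, hfK, ?_⟩
  obtain ⟨C, hC0, hC⟩ := D_bound (xh := xh) (ah := ah) (m := m) (x := x) (a := a) (J := J) ht
  refine tendsto_integral_of_dominated_convergence _
    (fun n => (D_meas (F n)).aestronglyMeasurable) (bound_int C) (fun n => hC _ (hF n)) ?_
  filter_upwards [h', LocallyIntegrable.ae_hasDerivAt_integral hGl] with y hy hd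
  have : deriv f y = G' y := ((hd (xh - t)).const_add _).deriv
  rw [this]
  exact ((Hber_cont.tendsto _).comp hy).sub_const _

end

/-- If `K` is nonempty then the excess entropy is finite on `K`, attains its infimum on `K`,
and the minimizer is unique. -/
theorem excessEntropy_exists_unique_minimizer
    (t : ℝ) (ht : 0 < t) (xh ah : ℝ) (m : ℕ) (x a : Fin m → ℝ) (J : Set (Fin m))
    (hK : (Kset xh ah t m x a J).Nonempty) :
    (∀ f ∈ Kset xh ah t m x a J,
      Integrable (fun y => Hber (deriv f y) - Hber (deriv (parabXA xh ah t) y))) ∧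
    ∃! f₀ : ℝ → ℝ, f₀ ∈ Kset xh ah t m x a J ∧
      ∀ f ∈ Kset xh ah t m x a J, excessEntropy xh ah t f₀ ≤ excessEntropy xh ah t f := by
  
  refine ⟨fun f hf => D_int ht hf, ?_⟩
  set K := Kset xh ah t m x a J with hKdef
  set L := sInf (excessEntropy xh ah t '' K) with hL
  have hbdd : BddBelow (excessEntropy xh ah t '' K) := by
    obtain ⟨B, hB⟩ := I_lower (xh := xh) (ah := ah) (m := m) (x := x) (a := a) (J := J) ht
    exact ⟨B, by rintro _ ⟨f, hf, rfl⟩; exact hB f hf⟩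
  have hLle : ∀ f ∈ K, L ≤ excessEntropy xh ah t f := fun f hf => csInf_le hbdd ⟨f, hf, rfl⟩
  have hseq : ∀ n : ℕ, ∃ f ∈ K, excessEntropy xh ah t f < L + 1 / ((n : ℝ) + 1) := by
    intro n
    obtain ⟨_, ⟨f, hf, rfl⟩, h⟩ := exists_lt_of_csInf_lt (hK.image (excessEntropy xh ah t))
      (show sInf (excessEntropy xh ah t '' K) < L + 1 / ((n : ℝ) + 1) by
        have : 0 < 1 / ((n : ℝ) + 1) := by positivity
        linarith)
    exact ⟨f, hf, h⟩
  choose F hF hFL using hseq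
  let μ := volume.restrict (Set.Icc (xh - t) (xh + t))
  let G : ℕ → Lp ℝ 2 μ := fun n => (sq_memLp (hF n) 2).toLp (deriv (F n))
  have hnorm : ∀ n k, ‖G n - G k‖ ^ 2 = ∫ y, (deriv (F n) y - deriv (F k) y) ^ 2 ∂μ := by
    intro n k
    rw [← real_inner_self_eq_norm_sq, L2.inner_def]
    refine integral_congr_ae ?_
    filter_upwards [Lp.coeFn_sub (G n) (G k), (sq_memLp (hF n) 2).coeFn_toLp,
      (sq_memLp (hF k) 2).coeFn_toLp] with y h1 h2 h3
    have : (G n - G k : Lp ℝ 2 μ) y = deriv (F n) y - deriv (F k) y := by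
      rw [h1, Pi.sub_apply]
      exact congrArg₂ _ h2 h3
    rw [this]
    simp [sq]
  have hest : ∀ N n k : ℕ, N ≤ n → N ≤ k → ‖G n - G k‖ ^ 2 ≤ 8 * (1 / ((N : ℝ) + 1)) := by
    intro N n k hn hk
    rw [hnorm]
    have h1 := key_ineq ht (hF n) (hF k)
    have h2 := hLle _ (K_mid (hF n) (hF k))
    have h3 := hFL n
    have h4 := hFL k
    have h5 : 1 / ((n : ℝ) + 1) ≤ 1 / ((N : ℝ) + 1) := Nat.one_div_le_one_div hn
    have h6 : 1 / ((k : ℝ) + 1) ≤ 1 / ((N : ℝ) + 1) := Nat.one_div_le_one_div hk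
    change (∫ y in Set.Icc (xh - t) (xh + t), (deriv (F n) y - deriv (F k) y) ^ 2) ≤ _
    linarith
  have hcau : CauchySeq G := by
    rw [Metric.cauchySeq_iff]
    intro ε hε
    obtain ⟨N, hN⟩ := exists_nat_one_div_lt (show 0 < ε ^ 2 / 8 by positivity)
    refine ⟨N, fun n hn k hk => ?_⟩
    rw [dist_eq_norm]
    refine lt_of_pow_lt_pow_left₀ 2 hε.le ?_
    have := hest N n k hn hk
    linarith
  obtain ⟨g, hg⟩ := cauchySeq_tendsto_of_complete hcau
  obtain ⟨ns, hns, hae⟩ := (tendstoInMeasure_of_tendsto_Lp hg).exists_seq_tendsto_ae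
  have hae' : ∀ᵐ y ∂μ, Tendsto (fun n => deriv (F (ns n)) y) atTop (𝓝 (g y)) := by
    have hall : ∀ᵐ y ∂μ, ∀ n, G n y = deriv (F n) y :=
      ae_all_iff.2 fun n => (sq_memLp (hF n) 2).coeFn_toLp
    filter_upwards [hae, hall] with y h1 h2
    simpa only [h2] using h1
  obtain ⟨f, hfK, hlim⟩ := K_compact ht (fun n => hF (ns n)) hae'
  have hfL : excessEntropy xh ah t f ≤ L := by
    have h1 : Tendsto (fun n : ℕ => L + 1 / ((n : ℝ) + 1)) atTop (𝓝 (L + 0)) :=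
      tendsto_const_nhds.add tendsto_one_div_add_atTop_nhds_zero_nat
    rw [add_zero] at h1
    exact le_of_tendsto_of_tendsto' hlim (h1.comp hns.tendsto_atTop) (fun n => (hFL (ns n)).le)
  refine ⟨f, ⟨hfK, fun g hg => hfL.trans (hLle g hg)⟩, ?_⟩
  rintro g ⟨hgK, hgm⟩
  refine K_eq ht hgK hfK ?_
  have h1 := key_ineq ht hgK hfK
  have h2 := hLle _ (K_mid hgK hfK)
  have h3 := hgm f hfK
  linarith
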